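/- arXiv:2503.00970 — 2 statements merged into one kernel-verified Lean document; each statement's English description precedes it below -/
import Mathlib

section
/- Let C ⊆ ℝⁿ be a pointed n-dimensional closed convex cone, ω ⊆ Ω = S^{n-1} ∩ int C° a nonempty compact set, μ a nonzero finite Borel measure on ω, and p < 0. Then there exists K ∈ 𝒦(C,ω) such that for every continuous f : ω → (0,∞), γⁿ([f]) / ∫_ω f(u)^p dμ(u) ≤ γⁿ(K) / ∫_ω (−h_K(u))^p dμ(u); that is, the functional φ_μ(f) = γⁿ([f]) / ∫_ω f^p dμ attains its supremum over C⁺(ω) at the (absolute) support function of some K ∈ 𝒦(C,ω). -/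
open MeasureTheory Metric Set Filter
open scoped RealInnerProductSpace Pointwise Topology ENNReal

noncomputable section

/-- `ℝⁿ` as Euclidean space. -/
abbrev En (n : ℕ) := EuclideanSpace ℝ (Fin n)

/-- The standard Gaussian measure of a set `A ⊆ ℝⁿ`:
`γⁿ(A) = (2π)^{-n/2} ∫_A e^{-‖x‖²/2} dx`. -/
def gaussianMeasure (n : ℕ) (A : Set (En n)) : ℝ :=
  (2 * Real.pi) ^ (-(n : ℝ) / 2) * ∫ x in A, Real.exp (-‖x‖ ^ 2 / 2)

/-- A pointed (no lines), `n`-dimensional (nonempty interior), closed convex cone. -/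
def IsPointedCone {n : ℕ} (C : Set (En n)) : Prop :=
  IsClosed C ∧ Convex ℝ C ∧ (∀ x ∈ C, ∀ c : ℝ, 0 ≤ c → c • x ∈ C) ∧
    (interior C).Nonempty ∧ ∀ x ∈ C, -x ∈ C → x = 0

/-- The polar cone `C° = {x : ⟨x,y⟩ ≤ 0 ∀ y ∈ C}`. -/
def polarCone {n : ℕ} (C : Set (En n)) : Set (En n) := {x | ∀ y ∈ C, ⟪x, y⟫ ≤ 0}

/-- `Ω = S^{n-1} ∩ int C°`. -/
def OmegaSet {n : ℕ} (C : Set (En n)) : Set (En n) :=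
  sphere (0 : En n) 1 ∩ interior (polarCone C)

/-- A pseudo-cone: nonempty closed convex set not containing the origin with `λK ⊆ K` for `λ ≥ 1`. -/
def IsPseudoCone {n : ℕ} (K : Set (En n)) : Prop :=
  K.Nonempty ∧ IsClosed K ∧ Convex ℝ K ∧ (0 : En n) ∉ K ∧
    ∀ c : ℝ, 1 ≤ c → c • K ⊆ K

/-- The recession cone `rec K = {z : K + z ⊆ K}`. -/
def recessionCone {n : ℕ} (K : Set (En n)) : Set (En n) := {z | ∀ x ∈ K, x + z ∈ K}

/-- A `C`-pseudo-cone: a pseudo-cone whose recession cone is `C`. -/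
def IsCPseudoCone {n : ℕ} (C K : Set (En n)) : Prop :=
  IsPseudoCone K ∧ recessionCone K = C

/-- The support function `h_K(u) = sup {⟨x,u⟫ : x ∈ K}`. -/
def suppFn {n : ℕ} (K : Set (En n)) (u : En n) : ℝ := sSup ((fun x => ⟪x, u⟫) '' K)

/-- The Wulff shape `[f] = C ∩ ⋂_{u ∈ ω} {y : ⟨y,u⟩ ≤ -f(u)}`. -/
def wulffShape {n : ℕ} (C ω : Set (En n)) (f : En n → ℝ) : Set (En n) :=
  C ∩ ⋂ u ∈ ω, {y | ⟪y, u⟫ ≤ -f u}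

/-- `K ∈ 𝒦(C,ω)`: `K` is a `C`-pseudo-cone that is `C`-determined by `ω`. -/
def InKClass {n : ℕ} (C ω K : Set (En n)) : Prop :=
  IsCPseudoCone C K ∧ K = C ∩ ⋂ u ∈ ω, {y | ⟪y, u⟫ ≤ suppFn K u}

end

/-- The Gaussian density is integrable. -/
theorem integrable_exp_neg_mul_norm_sq (n : ℕ) {b : ℝ} (hb : 0 < b) :
    Integrable (fun x : En n => Real.exp (-b * ‖x‖ ^ 2)) := by
  refine Integrable.of_integral_ne_zero ?_
  rw [GaussianFourier.integral_rexp_neg_mul_sq_norm hb]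
  positivity

theorem integrable_gaussianDensity (n : ℕ) :
    Integrable (fun x : En n => Real.exp (-‖x‖ ^ 2 / 2)) := by
  refine (integrable_exp_neg_mul_norm_sq n (b := 1 / 2) (by norm_num)).congr (.of_forall fun x => ?_)
  ring_nf

theorem gaussianMeasure_nonneg (n : ℕ) (A : Set (En n)) : 0 ≤ gaussianMeasure n A :=
  mul_nonneg (by positivity) (integral_nonneg fun _ => (Real.exp_pos _).le)

theorem gaussianMeasure_mono {n : ℕ} {A B : Set (En n)} (h : A ⊆ B) :
    gaussianMeasure n A ≤ gaussianMeasure n B := by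
  refine mul_le_mul_of_nonneg_left ?_ (by positivity)
  exact setIntegral_mono_set (integrable_gaussianDensity n).integrableOn
    (.of_forall fun _ => (Real.exp_pos _).le) h.eventuallyLE

theorem gaussianMeasure_pos {n : ℕ} {A U : Set (En n)} (hU : IsOpen U) (hne : U.Nonempty)
    (hUA : U ⊆ A) : 0 < gaussianMeasure n A := by
  refine lt_of_lt_of_le ?_ (gaussianMeasure_mono hUA)
  refine mul_pos (by positivity) ?_
  rw [setIntegral_pos_iff_support_of_nonneg_ae (.of_forall fun _ => (Real.exp_pos _).le)
    (integrable_gaussianDensity n).integrableOn]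
  have : Function.support (fun x : En n => Real.exp (-‖x‖ ^ 2 / 2)) = univ := by
    ext x; simp [(Real.exp_pos _).ne']
  rw [this, univ_inter]
  exact hU.measure_pos volume hne

/-- Gaussian tail bound for sets at distance at least `b` from the origin. -/
theorem exists_gaussianMeasure_le_exp (n : ℕ) : ∃ T : ℝ, 0 ≤ T ∧ ∀ (A : Set (En n)) (b : ℝ),
    MeasurableSet A → 0 ≤ b → (∀ x ∈ A, b ≤ ‖x‖) →
      gaussianMeasure n A ≤ T * Real.exp (-(1 / 4) * b ^ 2) := by
  have hi := integrable_exp_neg_mul_norm_sq n (b := 1 / 4) (by norm_num)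
  refine ⟨(2 * Real.pi) ^ (-(n : ℝ) / 2) * ∫ x : En n, Real.exp (-(1 / 4) * ‖x‖ ^ 2),
    mul_nonneg (by positivity) (integral_nonneg fun _ => (Real.exp_pos _).le), ?_⟩
  intro A b hA hb hAb
  rw [gaussianMeasure, mul_assoc]
  refine mul_le_mul_of_nonneg_left ?_ (by positivity)
  rw [← integral_mul_const]
  refine (setIntegral_mono_on (integrable_gaussianDensity n).integrableOn
    (hi.mul_const _).integrableOn hA fun x hx => ?_).trans
    (setIntegral_le_integral (hi.mul_const _) (.of_forall fun _ => by positivity))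
  rw [← Real.exp_add, Real.exp_le_exp]
  have := pow_le_pow_left₀ hb (hAb x hx) 2
  linarith

/-- Upper semicontinuity of the Gaussian measure along sequences of sets. -/
theorem le_gaussianMeasure_of_tendsto {n : ℕ} {A : ℕ → Set (En n)} {B : Set (En n)}
    (hA : ∀ k, MeasurableSet (A k)) (hAB : ∀ x, (∃ᶠ k in atTop, x ∈ A k) → x ∈ B) {l : ℝ}
    (hl : Tendsto (fun k => gaussianMeasure n (A k)) atTop (𝓝 l)) :
    l ≤ gaussianMeasure n B := by
  have hanti : Antitone fun k => ⋃ j ≥ k, A j := fun a b hab =>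
    biUnion_subset_biUnion_left fun j hj => le_trans hab hj
  have ht : Tendsto (fun k => gaussianMeasure n (⋃ j ≥ k, A j)) atTop
      (𝓝 (gaussianMeasure n (⋂ k, ⋃ j ≥ k, A j))) :=
    (tendsto_setIntegral_of_antitone
      (fun k => MeasurableSet.iUnion fun j => MeasurableSet.iUnion fun _ => hA j) hanti
      ⟨0, (integrable_gaussianDensity n).integrableOn⟩).const_mul _
  refine (le_of_tendsto_of_tendsto' hl ht fun k => gaussianMeasure_mono ?_).trans
    (gaussianMeasure_mono fun x hx => hAB x ?_)
  · exact subset_iUnion₂_of_subset k le_rfl subset_rfl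
  · rw [frequently_atTop]
    intro k
    have := mem_iInter.1 hx k
    simpa using this

theorem wulffShape_isClosed {n : ℕ} {C ω : Set (En n)} (hC : IsClosed C) (f : En n → ℝ) :
    IsClosed (wulffShape C ω f) :=
  hC.inter <| isClosed_biInter fun _ _ =>
    isClosed_le (continuous_id.inner continuous_const) continuous_const

theorem mem_wulffShape {n : ℕ} {C ω : Set (En n)} {f : En n → ℝ} {x : En n} :
    x ∈ wulffShape C ω f ↔ x ∈ C ∧ ∀ u ∈ ω, ⟪x, u⟫ ≤ -f u := by
  simp [wulffShape]

/-- On a compact subset of `Ω` the pairing with `C` is uniformly negative. -/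
theorem exists_inner_le_neg_mul_norm {n : ℕ} {C ω : Set (En n)} (hωc : IsCompact ω)
    (hωΩ : ω ⊆ OmegaSet C) :
    ∃ δ > 0, ∀ u ∈ ω, ∀ x ∈ C, ⟪x, u⟫ ≤ -(δ * ‖x‖) := by
  obtain ⟨δ, hδ, hsub⟩ := hωc.exists_cthickening_subset_open isOpen_interior
    (fun u hu => (hωΩ hu).2)
  refine ⟨δ, hδ, fun u hu x hx => ?_⟩
  rcases eq_or_ne x 0 with rfl | hx0
  · simp
  have hn : 0 < ‖x‖ := norm_pos_iff.2 hx0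
  have hmem : u + (δ / ‖x‖) • x ∈ cthickening δ ω := by
    refine mem_cthickening_of_dist_le _ u _ _ hu ?_
    rw [dist_eq_norm, add_sub_cancel_left, norm_smul, Real.norm_of_nonneg (by positivity),
      div_mul_cancel₀ _ hn.ne']
  have h := interior_subset (hsub hmem) x hx
  rw [inner_add_left, real_inner_smul_left, real_inner_self_eq_norm_sq, real_inner_comm] at h
  have : δ / ‖x‖ * ‖x‖ ^ 2 = δ * ‖x‖ := by field_simp
  linarith

theorem norm_eq_one_of_subset_OmegaSet {n : ℕ} {C ω : Set (En n)} (hωΩ : ω ⊆ OmegaSet C)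
    {u : En n} (hu : u ∈ ω) : ‖u‖ = 1 :=
  mem_sphere_zero_iff_norm.1 (hωΩ hu).1

namespace IsPointedCone

variable {n : ℕ} {C : Set (En n)}

theorem add_mem (hC : IsPointedCone C) {x y : En n} (hx : x ∈ C) (hy : y ∈ C) : x + y ∈ C := by
  have h := hC.2.1 hx hy (show (0 : ℝ) ≤ 1 / 2 by norm_num) (show (0 : ℝ) ≤ 1 / 2 by norm_num)
    (by norm_num)
  have h2 := hC.2.2.1 _ h 2 (by norm_num)
  rw [← smul_add, smul_smul] at h2
  norm_num at h2
  exact h2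

theorem smul_mem_interior (hC : IsPointedCone C) {x : En n} (hx : x ∈ interior C) {c : ℝ}
    (hc : 0 < c) : c • x ∈ interior C := by
  have h : c • C ⊆ C := by
    rintro _ ⟨y, hy, rfl⟩
    exact hC.2.2.1 y hy c hc.le
  have := interior_mono h
  rw [interior_smul₀ hc.ne'] at this
  exact this (smul_mem_smul_set hx)

/-- The interior of the cone contains vectors of arbitrarily large norm. -/
theorem exists_mem_interior_norm_gt (hn : 1 ≤ n) (hC : IsPointedCone C) (R : ℝ) :
    ∃ x ∈ interior C, R < ‖x‖ := by
  have : Nonempty (Fin n) := ⟨⟨0, hn⟩⟩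
  obtain ⟨x, hx, hx0⟩ : ∃ x ∈ interior C, x ≠ 0 := by
    by_contra! h
    have h0 : volume (interior C) ≤ volume ({0} : Set (En n)) := measure_mono h
    rw [measure_singleton] at h0
    exact (isOpen_interior.measure_pos volume hC.2.2.2.1).not_ge h0
  have hpos : 0 < ‖x‖ := norm_pos_iff.2 hx0
  refine ⟨((|R| + 1) / ‖x‖) • x, hC.smul_mem_interior hx (by positivity), ?_⟩
  rw [norm_smul, Real.norm_of_nonneg (by positivity), div_mul_cancel₀ _ hpos.ne']
  linarith [le_abs_self R]

/-- The Wulff shape of a function bounded on `ω` has nonempty interior. -/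
theorem exists_isOpen_subset_wulffShape (hn : 1 ≤ n) (hC : IsPointedCone C) {ω : Set (En n)}
    (hωc : IsCompact ω) (hωΩ : ω ⊆ OmegaSet C) {f : En n → ℝ} {M : ℝ} (hf : ∀ u ∈ ω, f u ≤ M) :
    ∃ U : Set (En n), IsOpen U ∧ U.Nonempty ∧ U ⊆ wulffShape C ω f := by
  obtain ⟨δ, hδ, hδC⟩ := exists_inner_le_neg_mul_norm hωc hωΩ
  refine ⟨interior C ∩ {x | M / δ < ‖x‖},
    isOpen_interior.inter (isOpen_lt continuous_const continuous_norm),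
    hC.exists_mem_interior_norm_gt hn _, fun x hx => mem_wulffShape.2
      ⟨interior_subset hx.1, fun u hu => ?_⟩⟩
  have h1 := hδC u hu x (interior_subset hx.1)
  have h2 : M / δ < ‖x‖ := hx.2
  rw [div_lt_iff₀' hδ] at h2
  linarith [hf u hu]

theorem recessionCone_wulffShape (hC : IsPointedCone C) {ω : Set (En n)}
    (hωΩ : ω ⊆ OmegaSet C) {f : En n → ℝ} (hne : (wulffShape C ω f).Nonempty) :
    recessionCone (wulffShape C ω f) = C := by
  ext z
  constructor
  · intro hz
    obtain ⟨x, hx⟩ := hne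
    have hk : ∀ k : ℕ, x + (k : ℝ) • z ∈ wulffShape C ω f := by
      intro k
      induction k with
      | zero => simpa using hx
      | succ k ih =>
        have := hz _ ih
        rwa [add_assoc, show (k : ℝ) • z + z = ((k + 1 : ℕ) : ℝ) • z by push_cast; module] at this
    have ht : Tendsto (fun k : ℕ => ((1 : ℝ) / ((k : ℝ) + 1)) • x + z) atTop (𝓝 z) := by
      simpa using ((tendsto_one_div_add_atTop_nhds_zero_nat (𝕜 := ℝ)).smul_const x).add_const z
    refine hC.1.mem_of_tendsto ht (.of_forall fun k => ?_)
    have h := hC.2.2.1 _ (hk (k + 1)).1 (1 / ((k : ℝ) + 1)) (by positivity)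
    rw [smul_add, smul_smul, Nat.cast_succ, one_div_mul_cancel (by positivity), one_smul] at h
    exact h
  · intro hz x hx
    rw [mem_wulffShape] at hx ⊢
    refine ⟨hC.add_mem hx.1 hz, fun u hu => ?_⟩
    have h1 := interior_subset (hωΩ hu).2 z hz
    rw [real_inner_comm] at h1
    rw [inner_add_left]
    linarith [hx.2 u hu]

end IsPointedCone

section SupportFunction

variable {n : ℕ} {C ω : Set (En n)} {f : En n → ℝ}

theorem bddAbove_inner_wulffShape {u : En n} (hu : u ∈ ω) :
    BddAbove ((fun x => ⟪x, u⟫) '' wulffShape C ω f) := by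
  refine ⟨-f u, ?_⟩
  rintro _ ⟨x, hx, rfl⟩
  exact (mem_wulffShape.1 hx).2 u hu

theorem inner_le_suppFn_wulffShape {u x : En n} (hu : u ∈ ω) (hx : x ∈ wulffShape C ω f) :
    ⟪x, u⟫ ≤ suppFn (wulffShape C ω f) u :=
  le_csSup (bddAbove_inner_wulffShape hu) (mem_image_of_mem _ hx)

theorem suppFn_le {K : Set (En n)} (hK : K.Nonempty) {u : En n} {a : ℝ}
    (h : ∀ x ∈ K, ⟪x, u⟫ ≤ a) : suppFn K u ≤ a := by
  refine csSup_le (hK.image _) ?_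
  rintro _ ⟨x, hx, rfl⟩
  exact h x hx

theorem le_neg_suppFn_wulffShape (hne : (wulffShape C ω f).Nonempty) {u : En n} (hu : u ∈ ω) :
    f u ≤ -suppFn (wulffShape C ω f) u :=
  le_neg_of_le_neg (suppFn_le hne fun _ hx => (mem_wulffShape.1 hx).2 u hu)

theorem wulffShape_neg_suppFn (hne : (wulffShape C ω f).Nonempty) :
    wulffShape C ω (fun u => -suppFn (wulffShape C ω f) u) = wulffShape C ω f := by
  ext x
  simp only [mem_wulffShape, neg_neg]
  constructor
  · rintro ⟨hx, h⟩
    refine ⟨hx, fun u hu => (h u hu).trans ?_⟩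
    linarith [le_neg_suppFn_wulffShape hne hu]
  · rintro ⟨hx, h⟩
    exact ⟨hx, fun u hu => inner_le_suppFn_wulffShape hu (mem_wulffShape.2 ⟨hx, h⟩)⟩

theorem inKClass_wulffShape (hC : IsPointedCone C) (hω : ω.Nonempty) (hωΩ : ω ⊆ OmegaSet C)
    (hf : ∀ u ∈ ω, 0 < f u) (hne : (wulffShape C ω f).Nonempty) :
    InKClass C ω (wulffShape C ω f) := by
  refine ⟨⟨⟨hne, wulffShape_isClosed hC.1 f, ?_, ?_, ?_⟩,
    hC.recessionCone_wulffShape hωΩ hne⟩, ?_⟩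
  · refine hC.2.1.inter (convex_iInter₂ fun u _ => ?_)
    exact convex_halfSpace_le ((innerₛₗ ℝ).flip u).isLinear _
  · intro h0
    obtain ⟨u, hu⟩ := hω
    have := (mem_wulffShape.1 h0).2 u hu
    rw [inner_zero_left] at this
    linarith [hf u hu]
  · rintro c hc _ ⟨x, hx, rfl⟩
    rw [mem_wulffShape] at hx
    refine mem_wulffShape.2 ⟨hC.2.2.1 x hx.1 c (by linarith), fun u hu => ?_⟩
    have h1 := hx.2 u hu
    have h2 := hf u hu
    change ⟪c • x, u⟫ ≤ _
    rw [real_inner_smul_left]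
    nlinarith
  · have := wulffShape_neg_suppFn hne
    simpa [wulffShape] using this.symm

/-- Two-sided bounds and a Lipschitz bound for the absolute support function of a Wulff shape in
terms of its distance `b` to the origin. -/
theorem exists_bounds_neg_suppFn (hC : IsPointedCone C) (hω : ω.Nonempty)
    (hωΩ : ω ⊆ OmegaSet C) {δ : ℝ} (hδ : 0 < δ) (hδC : ∀ u ∈ ω, ∀ x ∈ C, ⟪x, u⟫ ≤ -(δ * ‖x‖))
    (hf : ∀ u ∈ ω, 0 < f u) (hne : (wulffShape C ω f).Nonempty) :
    ∃ b > 0, (∀ x ∈ wulffShape C ω f, b ≤ ‖x‖) ∧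
      (∀ u ∈ ω, δ * b ≤ -suppFn (wulffShape C ω f) u ∧ -suppFn (wulffShape C ω f) u ≤ b) ∧
      LipschitzOnWith (Real.toNNReal (b / δ)) (fun u => -suppFn (wulffShape C ω f) u) ω := by
  have hK := inKClass_wulffShape hC hω hωΩ hf hne
  have hsub := fun u hu x hx => inner_le_suppFn_wulffShape (C := C) (ω := ω) (f := f)
    (u := u) (x := x) hu hx
  have hKC : ∀ x ∈ wulffShape C ω f, x ∈ C := fun x hx => hx.1
  have h0 : (0 : En n) ∉ wulffShape C ω f := hK.1.1.2.2.2.1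
  obtain ⟨x₀, hx₀, hdist⟩ := (wulffShape_isClosed (ω := ω) hC.1 f).exists_infDist_eq_dist hne 0
  generalize wulffShape C ω f = K at *
  rw [dist_zero_left] at hdist
  have hmin : ∀ x ∈ K, ‖x₀‖ ≤ ‖x‖ := fun x hx => by
    rw [← hdist, ← dist_zero_left]
    exact infDist_le_dist_of_mem hx
  have hpos : 0 < ‖x₀‖ := norm_pos_iff.2 fun h => h0 (h ▸ hx₀)
  have hup : ∀ u ∈ ω, -suppFn K u ≤ ‖x₀‖ := fun u hu => by
    have h1 := hsub u hu x₀ hx₀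
    have h2 := abs_real_inner_le_norm x₀ u
    rw [norm_eq_one_of_subset_OmegaSet hωΩ hu, mul_one] at h2
    linarith [neg_abs_le ⟪x₀, u⟫]
  refine ⟨‖x₀‖, hpos, hmin, fun u hu => ⟨?_, hup u hu⟩, ?_⟩
  · refine le_neg_of_le_neg (suppFn_le hne fun x hx => ?_)
    have := mul_le_mul_of_nonneg_left (hmin x hx) hδ.le
    linarith [hδC u hu x (hKC x hx)]
  · refine LipschitzOnWith.of_le_add_mul _ fun u hu v hv => ?_
    rw [Real.coe_toNNReal _ (by positivity)]
    suffices h : suppFn K v ≤ suppFn K u + ‖x₀‖ / δ * dist u v by linarith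
    refine suppFn_le hne fun x hx => ?_
    rcases le_or_gt ‖x‖ (‖x₀‖ / δ) with hle | hgt
    · have h1 := hsub u hu x hx
      have h2 : ⟪x, v⟫ = ⟪x, u⟫ + ⟪x, v - u⟫ := by rw [inner_sub_right]; ring
      have h3 := real_inner_le_norm x (v - u)
      rw [← dist_eq_norm, dist_comm] at h3
      have h4 := mul_le_mul_of_nonneg_right hle (dist_nonneg (x := u) (y := v))
      linarith
    · rw [div_lt_iff₀' hδ] at hgt
      have h1 := hδC v hv x (hKC x hx)
      have h2 := hup u hu
      have h3 : 0 ≤ ‖x₀‖ / δ * dist u v := by positivity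
      linarith

end SupportFunction

/-- Sequential Arzelà–Ascoli for uniformly bounded, uniformly Lipschitz functions on a compact
set. -/
theorem exists_subseq_tendsto_of_lipschitzOnWith {X : Type*} [PseudoMetricSpace X] {s : Set X}
    (hs : IsCompact s) {L : NNReal} {a b : ℝ} (F : ℕ → X → ℝ)
    (hF : ∀ k, LipschitzOnWith L (F k) s) (hFb : ∀ k, ∀ x ∈ s, F k x ∈ Icc a b) :
    ∃ (g : X → ℝ) (φ : ℕ → ℕ), StrictMono φ ∧ LipschitzOnWith L g s ∧ (∀ x ∈ s, g x ∈ Icc a b) ∧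
      ∀ x ∈ s, Tendsto (fun k => F (φ k) x) atTop (𝓝 (g x)) := by
  have : CompactSpace s := isCompact_iff_compactSpace.1 hs
  let S : Set C(s, ℝ) := {f | LipschitzWith L f ∧ ∀ x, f x ∈ Icc a b}
  have himg : ContinuousMap.toFun '' S =
      {f : s → ℝ | LipschitzWith L f} ∩ univ.pi fun _ => Icc a b := by
    ext f
    constructor
    · rintro ⟨f, hf, rfl⟩
      exact ⟨hf.1, fun x _ => hf.2 x⟩
    · rintro ⟨h1, h2⟩
      exact ⟨⟨f, h1.continuous⟩, ⟨h1, fun x => h2 x trivial⟩, rfl⟩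
  have hclosed : IsClosed {f : s → ℝ | LipschitzWith L f} := by
    simp only [lipschitzWith_iff_dist_le_mul, ofPred_forall]
    exact isClosed_iInter fun x => isClosed_iInter fun y =>
      isClosed_le ((continuous_apply x).dist (continuous_apply y)) continuous_const
  have hS : IsCompact S := by
    refine ArzelaAscoli.isCompact_of_equicontinuous S ?_ ?_
    · rw [himg]
      exact (isCompact_univ_pi fun _ => isCompact_Icc).inter_left hclosed
    · exact (LipschitzWith.uniformEquicontinuous _ L fun f => f.2.1).equicontinuous
  let G : ℕ → C(s, ℝ) := fun k =>
    ⟨s.domRestrict (F k), (lipschitzOnWith_iff_restrict.1 (hF k)).continuous⟩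
  have hG : ∀ k, G k ∈ S := fun k =>
    ⟨lipschitzOnWith_iff_restrict.1 (hF k), fun x => hFb k x x.2⟩
  obtain ⟨g, hgS, φ, hφ, hlim⟩ := hS.tendsto_subseq hG
  have hext : ∀ x : s, Function.extend Subtype.val g 0 (x : X) = g x := fun x =>
    Subtype.val_injective.extend_apply _ _ x
  refine ⟨Function.extend Subtype.val g 0, φ, hφ, ?_, fun x hx => ?_, fun x hx => ?_⟩
  · rw [lipschitzOnWith_iff_restrict]
    convert hgS.1 using 1
    exact funext hext
  · rw [hext ⟨x, hx⟩]
    exact hgS.2 _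
  · rw [hext ⟨x, hx⟩]
    exact ((continuous_eval_const (F := C(s, ℝ)) (⟨x, hx⟩ : s)).tendsto g).comp hlim

/-- `b ^ q * exp (-b² / 4)` becomes small both near `0` and near `∞`. -/
theorem exists_Icc_rpow_mul_exp_le {q ε : ℝ} (hq : 0 < q) (hε : 0 < ε) :
    ∃ b₀ > 0, ∃ b₁ > 0, ∀ b > 0, b ∉ Icc b₀ b₁ → b ^ q * Real.exp (-(1 / 4) * b ^ 2) ≤ ε := by
  have h1 : Tendsto (fun b : ℝ => b ^ q * Real.exp (-(1 / 4) * b ^ 2)) atTop (𝓝 0) := by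
    refine (rpow_mul_exp_neg_mul_sq_isLittleO_exp_neg (by norm_num) q).trans_tendsto ?_
    refine Real.tendsto_exp_atBot.comp ?_
    exact tendsto_id.const_mul_atTop_of_neg (by norm_num)
  have h2 : Tendsto (fun b : ℝ => b ^ q * Real.exp (-(1 / 4) * b ^ 2)) (𝓝[>] 0) (𝓝 0) := by
    have hc : ContinuousAt (fun b : ℝ => b ^ q * Real.exp (-(1 / 4) * b ^ 2)) 0 :=
      (Real.continuousAt_rpow_const _ _ (Or.inr hq.le)).mul (by fun_prop)
    have := hc.tendsto
    simp only [Real.zero_rpow hq.ne', zero_mul] at this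
    exact this.mono_left nhdsWithin_le_nhds
  obtain ⟨b₁, h1'⟩ := (h1.eventually_le_const hε).exists_forall_of_atTop
  obtain ⟨b₀, hb₀, h2'⟩ := mem_nhdsGT_iff_exists_Ioo_subset.1 (h2.eventually_le_const hε)
  refine ⟨b₀, hb₀, max b₁ 1, by positivity, fun b hb hbI => ?_⟩
  rcases lt_or_ge b b₀ with h | h
  · exact h2' ⟨hb, h⟩
  · refine h1' b ((le_max_left b₁ 1).trans ?_)
    by_contra! hlt
    exact hbI ⟨h, hlt.le⟩

section Denominator

variable {X : Type*} [TopologicalSpace X] [T2Space X] [MeasurableSpace X] [BorelSpace X] {s : Set X}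
  {μ : Measure X} [IsFiniteMeasure μ] {p : ℝ}

theorem integrableOn_rpow_of_continuousOn (hs : IsCompact s) {f : X → ℝ} (hf : ContinuousOn f s)
    (hpos : ∀ x ∈ s, 0 < f x) : IntegrableOn (fun x => f x ^ p) s μ :=
  (hf.rpow_const fun x hx => Or.inl (hpos x hx).ne').integrableOn_compact hs

theorem rpow_mul_measureReal_le_setIntegral (hs : IsCompact s) (hp : p < 0) {f : X → ℝ} {b : ℝ}
    (hf : ContinuousOn f s) (hpos : ∀ x ∈ s, 0 < f x) (hb : ∀ x ∈ s, f x ≤ b) :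
    b ^ p * μ.real s ≤ ∫ x in s, f x ^ p ∂μ := by
  have := setIntegral_mono_on (μ := μ) (s := s) (f := fun _ => b ^ p) (g := fun x => f x ^ p)
    (integrableOn_const (measure_ne_top _ _)) (integrableOn_rpow_of_continuousOn hs hf hpos)
    hs.measurableSet fun x hx => Real.rpow_le_rpow_of_nonpos (hpos x hx) (hb x hx) hp.le
  rwa [setIntegral_const, smul_eq_mul, mul_comm] at this

theorem setIntegral_rpow_pos (hs : IsCompact s) (hμ : μ s ≠ 0) (hp : p < 0) {f : X → ℝ}
    (hf : ContinuousOn f s) (hpos : ∀ x ∈ s, 0 < f x) : 0 < ∫ x in s, f x ^ p ∂μ := by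
  obtain ⟨M, hM⟩ := (hs.image_of_continuousOn hf).bddAbove
  refine lt_of_lt_of_le ?_ (rpow_mul_measureReal_le_setIntegral (b := max M 1) hs hp hf hpos
    fun x hx => (hM (mem_image_of_mem f hx)).trans (le_max_left _ _))
  have : 0 < μ.real s := ENNReal.toReal_pos hμ (measure_ne_top _ _)
  have : 0 < max M 1 := by positivity
  positivity

end Denominator

/-- For a fixed set `K`, the quotient `γⁿ(K) / ∫_ω f^p dμ` is monotone in `f`. -/
theorem gaussianMeasure_div_le_of_le {n : ℕ} {ω : Set (En n)} (hωc : IsCompact ω)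
    {μ : Measure (En n)} [IsFiniteMeasure μ] (hμ : μ ω ≠ 0) {p : ℝ} (hp : p < 0)
    {f h : En n → ℝ} (hf : ContinuousOn f ω) (hfpos : ∀ u ∈ ω, 0 < f u) (hh : ContinuousOn h ω)
    (hfh : ∀ u ∈ ω, f u ≤ h u) (K : Set (En n)) :
    gaussianMeasure n K / ∫ u in ω, f u ^ p ∂μ ≤ gaussianMeasure n K / ∫ u in ω, h u ^ p ∂μ := by
  have hhpos : ∀ u ∈ ω, 0 < h u := fun u hu => (hfpos u hu).trans_le (hfh u hu)
  refine div_le_div_of_nonneg_left (gaussianMeasure_nonneg n K)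
    (setIntegral_rpow_pos hωc hμ hp hh hhpos) ?_
  exact setIntegral_mono_on (integrableOn_rpow_of_continuousOn hωc hh hhpos)
    (integrableOn_rpow_of_continuousOn hωc hf hfpos) hωc.measurableSet
    fun u hu => Real.rpow_le_rpow_of_nonpos (hfpos u hu) (hfh u hu) hp.le

/-- Upper semicontinuity of the functional under bounded pointwise convergence. -/
theorem le_gaussianMeasure_div_of_tendsto {n : ℕ} {C ω : Set (En n)} (hC : IsClosed C)
    (hωc : IsCompact ω) {μ : Measure (En n)} [IsFiniteMeasure μ] (hμ : μ ω ≠ 0)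
    {p : ℝ} (hp : p < 0) {F : ℕ → En n → ℝ} {g : En n → ℝ} {a M : ℝ} (ha : 0 < a)
    (hF : ∀ k, ContinuousOn (F k) ω) (hFa : ∀ k, ∀ u ∈ ω, a ≤ F k u)
    (hg : ContinuousOn g ω) (hga : ∀ u ∈ ω, a ≤ g u)
    (hlim : ∀ u ∈ ω, Tendsto (fun k => F k u) atTop (𝓝 (g u)))
    (hM : Tendsto (fun k => gaussianMeasure n (wulffShape C ω (F k)) / ∫ u in ω, F k u ^ p ∂μ)
      atTop (𝓝 M)) :
    M ≤ gaussianMeasure n (wulffShape C ω g) / ∫ u in ω, g u ^ p ∂μ := by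
  have hFpos : ∀ k, ∀ u ∈ ω, 0 < F k u := fun k u hu => ha.trans_le (hFa k u hu)
  have hgpos : ∀ u ∈ ω, 0 < g u := fun u hu => ha.trans_le (hga u hu)
  have hD : Tendsto (fun k => ∫ u in ω, F k u ^ p ∂μ) atTop (𝓝 (∫ u in ω, g u ^ p ∂μ)) := by
    refine tendsto_integral_of_dominated_convergence (fun _ => a ^ p)
      (fun k => (integrableOn_rpow_of_continuousOn hωc (hF k) (hFpos k)).aestronglyMeasurable)
      (integrable_const _) (fun k => ?_) ?_
    · filter_upwards [ae_restrict_mem hωc.measurableSet] with u hu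
      rw [Real.norm_of_nonneg (Real.rpow_nonneg (hFpos k u hu).le p)]
      exact Real.rpow_le_rpow_of_nonpos ha (hFa k u hu) hp.le
    · filter_upwards [ae_restrict_mem hωc.measurableSet] with u hu
      exact (hlim u hu).rpow_const (Or.inl (hgpos u hu).ne')
  rw [le_div_iff₀ (setIntegral_rpow_pos hωc hμ hp hg hgpos)]
  refine le_gaussianMeasure_of_tendsto
    (fun k => (wulffShape_isClosed (ω := ω) hC (F k)).measurableSet) (fun x hx => ?_)
    ((hM.mul hD).congr fun k => div_mul_cancel₀ _
      (setIntegral_rpow_pos hωc hμ hp (hF k) (hFpos k)).ne')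
  obtain ⟨φ, hφ, hxφ⟩ := extraction_of_frequently_atTop hx
  refine mem_wulffShape.2 ⟨(mem_wulffShape.1 (hxφ 0)).1, fun u hu => ?_⟩
  exact ge_of_tendsto' ((hlim u hu).neg.comp hφ.tendsto_atTop)
    fun k => (mem_wulffShape.1 (hxφ k)).2 u hu

/-- Existence of a maximizer for `φ_μ(f) = γⁿ([f]) / ∫_ω f^p dμ` (with `p < 0`) over positive
continuous functions on `ω`, attained at the absolute support function of some `K ∈ 𝒦(C,ω)`. -/
theorem exists_maximizer_phi_mu {n : ℕ} (hn : 1 ≤ n) (C : Set (En n)) (hC : IsPointedCone C)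
    (ω : Set (En n)) (hω : ω.Nonempty) (hωc : IsCompact ω) (hωΩ : ω ⊆ OmegaSet C)
    (μ : Measure (En n)) [IsFiniteMeasure μ] (hμsupp : μ ωᶜ = 0) (hμ : μ ω ≠ 0)
    (p : ℝ) (hp : p < 0) :
    ∃ K : Set (En n), InKClass C ω K ∧
      ∀ f : En n → ℝ, ContinuousOn f ω → (∀ u ∈ ω, 0 < f u) →
        gaussianMeasure n (wulffShape C ω f) / ∫ u in ω, f u ^ p ∂μ ≤
          gaussianMeasure n K / ∫ u in ω, (-suppFn K u) ^ p ∂μ := by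
  have hC' := hC.1
  obtain ⟨δ, hδ, hδC⟩ := exists_inner_le_neg_mul_norm hωc hωΩ
  have hμω : 0 < μ.real ω := ENNReal.toReal_pos hμ (measure_ne_top _ _)
  have hneW : ∀ f : En n → ℝ, ContinuousOn f ω → (wulffShape C ω f).Nonempty := fun f hf => by
    obtain ⟨M, hM⟩ := (hωc.image_of_continuousOn hf).bddAbove
    obtain ⟨U, -, hU, hUW⟩ := hC.exists_isOpen_subset_wulffShape hn hωc hωΩ
      (f := f) (M := M) fun u hu => hM (mem_image_of_mem f hu)
    exact hU.mono hUW
  set Φ : (En n → ℝ) → ℝ := fun f =>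
    gaussianMeasure n (wulffShape C ω f) / ∫ u in ω, f u ^ p ∂μ with hΦ
  have hΦ₁ : 0 < Φ fun _ => 1 := by
    obtain ⟨U, hUo, hU, hUW⟩ := hC.exists_isOpen_subset_wulffShape hn hωc hωΩ
      (f := fun _ => 1) (M := 1) fun _ _ => le_rfl
    exact div_pos (gaussianMeasure_pos hUo hU hUW)
      (setIntegral_rpow_pos hωc hμ hp continuousOn_const fun _ _ => one_pos)
  obtain ⟨T, hT, hTA⟩ := exists_gaussianMeasure_le_exp n
  obtain ⟨b₀, hb₀, b₁, hb₁, hb⟩ := exists_Icc_rpow_mul_exp_le (q := -p)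
    (ε := Φ (fun _ => 1) * μ.real ω / (T + 1)) (by linarith) (by positivity)
  set S : Set (En n → ℝ) := {f | LipschitzOnWith (Real.toNNReal (b₁ / δ)) f ω ∧
    ∀ u ∈ ω, f u ∈ Icc (min 1 (δ * b₀)) (max 1 b₁)} with hS
  have hlo : 0 < min 1 (δ * b₀) := lt_min one_pos (by positivity)
  have hhi : 0 < max 1 b₁ := lt_max_of_lt_left one_pos
  have hone : (fun _ => 1) ∈ S :=
    ⟨(LipschitzWith.const' 1).lipschitzOnWith, fun _ _ => ⟨min_le_left _ _, le_max_left _ _⟩⟩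
  have hbdd : BddAbove (Φ '' S) := by
    refine ⟨gaussianMeasure n univ / (max 1 b₁ ^ p * μ.real ω), ?_⟩
    rintro _ ⟨f, hf, rfl⟩
    exact div_le_div₀ (gaussianMeasure_nonneg n _) (gaussianMeasure_mono (subset_univ _))
      (by positivity) (rpow_mul_measureReal_le_setIntegral hωc hp hf.1.continuousOn
        (fun u hu => hlo.trans_le (hf.2 u hu).1) fun u hu => (hf.2 u hu).2)
  obtain ⟨v, -, hv, hvS⟩ := exists_seq_tendsto_sSup ⟨_, mem_image_of_mem Φ hone⟩ hbdd
  choose F hFS hFv using hvS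
  obtain ⟨g, φ, hφ, hgL, hgb, hlim⟩ := exists_subseq_tendsto_of_lipschitzOnWith hωc F
    (fun k => (hFS k).1) (fun k => (hFS k).2)
  have hgpos : ∀ u ∈ ω, 0 < g u := fun u hu => hlo.trans_le (hgb u hu).1
  have hmax : ∀ f ∈ S, Φ f ≤ Φ g := fun f hf =>
    (le_csSup hbdd (mem_image_of_mem Φ hf)).trans <|
      le_gaussianMeasure_div_of_tendsto hC' hωc hμ hp hlo
        (fun k => (hFS (φ k)).1.continuousOn) (fun k u hu => ((hFS (φ k)).2 u hu).1)
        hgL.continuousOn (fun u hu => (hgb u hu).1) hlim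
        ((hv.comp hφ.tendsto_atTop).congr fun k => (hFv (φ k)).symm)
  have hneg := hneW g hgL.continuousOn
  obtain ⟨_, _, _, _, hgLip⟩ := exists_bounds_neg_suppFn hC hω hωΩ hδ hδC hgpos hneg
  refine ⟨wulffShape C ω g, inKClass_wulffShape hC hω hωΩ hgpos hneg, fun f hf hfpos => ?_⟩
  refine le_trans ?_ (gaussianMeasure_div_le_of_le hωc hμ hp hgL.continuousOn hgpos
    hgLip.continuousOn (fun u hu => le_neg_suppFn_wulffShape hneg hu) _)
  have hnef := hneW f hf
  obtain ⟨b, hbpos, hbK, hbb, hLip⟩ := exists_bounds_neg_suppFn hC hω hωΩ hδ hδC hfpos hnef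
  set h : En n → ℝ := fun u => -suppFn (wulffShape C ω f) u with hh
  have hfh : Φ f ≤ Φ h := by
    simp only [hΦ]
    rw [hh, wulffShape_neg_suppFn hnef]
    exact gaussianMeasure_div_le_of_le hωc hμ hp hf hfpos hLip.continuousOn
      (fun u hu => le_neg_suppFn_wulffShape hnef hu) _
  refine hfh.trans ?_
  by_cases hbI : b ∈ Icc b₀ b₁
  · refine hmax h ⟨hLip.weaken (Real.toNNReal_le_toNNReal ?_), fun u hu => ⟨?_, ?_⟩⟩
    · exact div_le_div_of_nonneg_right hbI.2 hδ.le
    · exact (min_le_right _ _).trans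
        ((mul_le_mul_of_nonneg_left hbI.1 hδ.le).trans (hbb u hu).1)
    · exact (hbb u hu).2.trans (hbI.2.trans (le_max_right _ _))
  · refine le_trans ?_ (hmax _ hone)
    have hD := rpow_mul_measureReal_le_setIntegral (μ := μ) hωc hp hLip.continuousOn
      (fun u hu => (mul_pos hδ hbpos).trans_le (hbb u hu).1) fun u hu => (hbb u hu).2
    have hγ := hTA _ b (wulffShape_isClosed (ω := ω) hC' f).measurableSet hbpos.le hbK
    have hexp := hb b hbpos hbI
    have hWh : wulffShape C ω h = wulffShape C ω f := wulffShape_neg_suppFn hnef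
    have hbp : 0 < b ^ p := Real.rpow_pos_of_pos hbpos p
    calc Φ h ≤ T * Real.exp (-(1 / 4) * b ^ 2) / (b ^ p * μ.real ω) := by
          simp only [hΦ, hWh]
          exact div_le_div₀ (by positivity) hγ (by positivity) hD
      _ = T * (b ^ (-p) * Real.exp (-(1 / 4) * b ^ 2)) / μ.real ω := by
          rw [Real.rpow_neg hbpos.le]
          field_simp
      _ ≤ Φ fun _ => 1 := by
          rw [div_le_iff₀ hμω]
          refine (mul_le_mul_of_nonneg_left hexp hT).trans ?_
          rw [mul_div_assoc', div_le_iff₀ (by positivity), mul_comm]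
          exact mul_le_mul_of_nonneg_left (by linarith) (by positivity)
end

section
/- Let C ⊆ ℝⁿ be a pointed n-dimensional closed convex cone, let K and L be C-pseudo-cones, and let 0 < t < 1. Then γⁿ((1−t)K + tL) ≥ γⁿ(K)^{1−t} · γⁿ(L)^{t}, with equality if and only if K = L. Here (1−t)K + tL denotes the Minkowski combination {(1−t)x + ty : x ∈ K, y ∈ L}. -/
open MeasureTheory Metric Set Filter
open scoped RealInnerProductSpace Pointwise Topology ENNReal

theorem volume_add_le_of_add_subset {A B S : Set ℝ} (hA : MeasurableSet A) (hB : MeasurableSet B)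
    (hA' : A.Nonempty) (hB' : B.Nonempty) (hS : A + B ⊆ S) :
    volume A + volume B ≤ volume S := by
  have compact_case : ∀ P Q : Set ℝ, IsCompact P → IsCompact Q → P.Nonempty → Q.Nonempty →
      P ⊆ A → Q ⊆ B → volume P + volume Q ≤ volume S := by
    intro P Q hP hQ hP' hQ' hPA hQB
    obtain ⟨a, ha, ha'⟩ := hP.exists_isGreatest hP'
    obtain ⟨b, hb, hb'⟩ := hQ.exists_isLeast hQ'
    have h1 : volume P = volume ((fun x => b + x) '' P) := by simp
    have h2 : volume Q = volume ((fun x => a + x) '' Q) := by simp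
    have hd : AEDisjoint volume ((fun x => b + x) '' P) ((fun x => a + x) '' Q) := by
      refine measure_mono_null (t := {a + b}) ?_ (by simp)
      rintro _ ⟨⟨x, hx, rfl⟩, ⟨y, hy, hxy⟩⟩
      have := ha' hx
      have := hb' hy
      simp only [mem_singleton_iff] at *
      linarith
    rw [h1, h2, ← measure_union₀ ((hQ.image (by fun_prop)).measurableSet.nullMeasurableSet) hd]
    refine measure_mono (union_subset ?_ ?_)
    · rintro _ ⟨x, hx, rfl⟩
      simpa only [add_comm] using hS (add_mem_add (hPA hx) (hQB hb))
    · rintro _ ⟨x, hx, rfl⟩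
      exact hS (add_mem_add (hPA ha) (hQB hx))
  obtain ⟨a, ha⟩ := hA'
  obtain ⟨b, hb⟩ := hB'
  rw [hA.measure_eq_iSup_isCompact, hB.measure_eq_iSup_isCompact]
  simp only [iSup_and']
  refine ENNReal.biSup_add_biSup_le' (p := fun P => P ⊆ A ∧ IsCompact P)
    (q := fun Q => Q ⊆ B ∧ IsCompact Q) ⟨∅, by simp⟩ ⟨∅, by simp⟩ fun P hP Q hQ => ?_
  exact (add_le_add (measure_mono (subset_insert a P)) (measure_mono (subset_insert b Q))).trans
    (compact_case _ _ (hP.2.insert a) (hQ.2.insert b) (insert_nonempty a P) (insert_nonempty b Q)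
      (insert_subset ha hP.1) (insert_subset hb hQ.1))

theorem ENNReal.geom_mean_le_arith_mean2_weighted {w₁ w₂ : ℝ} (h₁ : 0 < w₁) (h₂ : 0 < w₂)
    (hw : w₁ + w₂ = 1) (p q : ℝ≥0∞) :
    p ^ w₁ * q ^ w₂ ≤ ENNReal.ofReal w₁ * p + ENNReal.ofReal w₂ * q := by
  rcases eq_or_ne p ∞ with rfl | hp
  · simp [h₁]
  rcases eq_or_ne q ∞ with rfl | hq
  · simp [h₂]
  lift p to NNReal using hp
  lift q to NNReal using hq
  rw [← ENNReal.coe_rpow_of_nonneg _ h₁.le, ← ENNReal.coe_rpow_of_nonneg _ h₂.le, ENNReal.ofReal,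
    ENNReal.ofReal]
  have := NNReal.geom_mean_le_arith_mean2_weighted w₁.toNNReal w₂.toNNReal p q
    (by rw [← Real.toNNReal_add h₁.le h₂.le, hw]; simp)
  rw [Real.coe_toNNReal _ h₁.le, Real.coe_toNNReal _ h₂.le] at this
  exact_mod_cast this

theorem lintegral_eq_lintegral_Ioo_meas_lt {α : Type*} [MeasurableSpace α] (μ : Measure α)
    {f : α → ℝ≥0∞} (hf : Measurable f) (hf1 : ∀ x, f x ≤ 1) :
    ∫⁻ x, f x ∂μ = ∫⁻ s in Ioo (0 : ℝ) 1, μ {x | ENNReal.ofReal s < f x} := by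
  have hfin : ∀ x, f x ≠ ∞ := fun x => ((hf1 x).trans_lt ENNReal.one_lt_top).ne
  have h := lintegral_eq_lintegral_meas_lt μ (f := fun x => (f x).toReal)
    (Eventually.of_forall fun _ => ENNReal.toReal_nonneg) hf.ennreal_toReal.aemeasurable
  simp only [ENNReal.ofReal_toReal (hfin _)] at h
  rw [h, ← Ioo_union_Ici_eq_Ioi (zero_lt_one' ℝ), lintegral_union measurableSet_Ici
    (by rw [Set.disjoint_left]; rintro x hx hx'; exact absurd hx.2 (not_lt.2 hx'))]
  have h2 : ∫⁻ s in Ici (1 : ℝ), μ {x | s < (f x).toReal} = 0 := by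
    rw [setLIntegral_congr_fun (g := fun _ => 0) measurableSet_Ici, lintegral_zero]
    intro s hs
    simp only
    convert measure_empty (μ := μ)
    ext x
    simp only [mem_ofPred_eq, mem_empty_iff_false, iff_false, not_lt]
    exact (ENNReal.toReal_mono (by simp) (hf1 x)).trans (by simpa using hs)
  rw [h2, add_zero]
  refine setLIntegral_congr_fun measurableSet_Ioo fun s hs => ?_
  congr 1
  ext x
  exact (ENNReal.ofReal_lt_iff_lt_toReal hs.1.le (hfin x)).symm

/-- The measure `μ` satisfies the Prékopa–Leindler inequality with parameter `t`. -/
def PrekopaLeindler {E : Type*} [AddCommGroup E] [Module ℝ E] [MeasurableSpace E] (t : ℝ)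
    (μ : Measure E) : Prop :=
  ∀ f g h : E → ℝ≥0∞, Measurable f → Measurable g → Measurable h →
    (∀ x y, f x ^ (1 - t) * g y ^ t ≤ h ((1 - t) • x + t • y)) →
    (∫⁻ x, f x ∂μ) ^ (1 - t) * (∫⁻ x, g x ∂μ) ^ t ≤ ∫⁻ x, h x ∂μ

section Line

variable {t : ℝ} {f g h : ℝ → ℝ≥0∞}

theorem prekopaLeindler_real_of_iSup_eq_one (ht0 : 0 < t) (ht1 : t < 1)
    (hf : Measurable f) (hg : Measurable g) (hh : Measurable h) (hf1 : ⨆ x, f x = 1)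
    (hg1 : ⨆ x, g x = 1)
    (H : ∀ x y, f x ^ (1 - t) * g y ^ t ≤ h ((1 - t) • x + t • y)) :
    (∫⁻ x, f x) ^ (1 - t) * (∫⁻ x, g x) ^ t ≤ ∫⁻ x, h x := by
  have ht1' : 0 < 1 - t := sub_pos.2 ht1
  have hfle : ∀ x, f x ≤ 1 := fun x => hf1 ▸ le_iSup f x
  have hgle : ∀ x, g x ≤ 1 := fun x => hg1 ▸ le_iSup g x
  refine (ENNReal.geom_mean_le_arith_mean2_weighted ht1' ht0 (by ring) _ _).trans ?_
  refine le_trans ?_ (lintegral_mono fun x => min_le_left (h x) 1)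
  have mf : ∀ {k : ℝ → ℝ≥0∞}, Antitone fun s : ℝ => volume {x | ENNReal.ofReal s < k x} :=
    fun {k} s s' hss => measure_mono fun x hx => (ENNReal.ofReal_le_ofReal hss).trans_lt hx
  rw [lintegral_eq_lintegral_Ioo_meas_lt _ hf hfle, lintegral_eq_lintegral_Ioo_meas_lt _ hg hgle,
    lintegral_eq_lintegral_Ioo_meas_lt _ (hh.min measurable_const) fun x => min_le_right _ _,
    ← lintegral_const_mul _ mf.measurable, ← lintegral_const_mul _ mf.measurable,
    ← lintegral_add_left (mf.measurable.const_mul _)]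
  refine setLIntegral_mono mf.measurable fun s hs => ?_
  have hs1 : ENNReal.ofReal s < 1 := by simpa using hs.2
  obtain ⟨x₀, hx₀⟩ := lt_iSup_iff.1 (hf1.symm ▸ hs1)
  obtain ⟨y₀, hy₀⟩ := lt_iSup_iff.1 (hg1.symm ▸ hs1)
  have key := volume_add_le_of_add_subset (A := (1 - t) • {x | ENNReal.ofReal s < f x})
    (B := t • {x | ENNReal.ofReal s < g x}) (S := {x | ENNReal.ofReal s < min (h x) 1})
    ((measurableSet_lt measurable_const hf).const_smul₀ _)
    ((measurableSet_lt measurable_const hg).const_smul₀ _)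
    (Set.Nonempty.smul_set ⟨x₀, hx₀⟩) (Set.Nonempty.smul_set ⟨y₀, hy₀⟩) ?_
  · simpa only [Measure.addHaar_smul_of_nonneg _ ht0.le, Measure.addHaar_smul_of_nonneg _ ht1'.le,
      Module.finrank_self, pow_one] using key
  · rintro _ ⟨_, ⟨x, hx, rfl⟩, _, ⟨y, hy, rfl⟩, rfl⟩
    refine lt_min (lt_of_lt_of_le ?_ (H x y)) hs1
    have hs0 : ENNReal.ofReal s ≠ 0 := by simpa using hs.1
    calc ENNReal.ofReal s = ENNReal.ofReal s ^ (1 - t) * ENNReal.ofReal s ^ t := by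
          rw [← ENNReal.rpow_add _ _ hs0 ENNReal.ofReal_ne_top]; simp
      _ < f x ^ (1 - t) * g y ^ t :=
          ENNReal.mul_lt_mul (ENNReal.rpow_lt_rpow hx ht1') (ENNReal.rpow_lt_rpow hy ht0)

theorem prekopaLeindler_real_of_bounded (ht0 : 0 < t) (ht1 : t < 1)
    (hf : Measurable f) (hg : Measurable g) (hh : Measurable h) (hf1 : ⨆ x, f x ≠ ∞)
    (hg1 : ⨆ x, g x ≠ ∞)
    (H : ∀ x y, f x ^ (1 - t) * g y ^ t ≤ h ((1 - t) • x + t • y)) :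
    (∫⁻ x, f x) ^ (1 - t) * (∫⁻ x, g x) ^ t ≤ ∫⁻ x, h x := by
  have ht1' : 0 < 1 - t := sub_pos.2 ht1
  set a := ⨆ x, f x with ha
  set b := ⨆ x, g x with hb
  rcases eq_or_ne a 0 with ha0 | ha0
  · have : ∀ x, f x = 0 := by simpa [ha] using ha0
    simp [this, ht1']
  rcases eq_or_ne b 0 with hb0 | hb0
  · have : ∀ x, g x = 0 := by simpa [hb] using hb0
    simp [this, ht0]
  set c := a⁻¹ ^ (1 - t) * b⁻¹ ^ t with hc
  have ha' := ENNReal.inv_ne_top.2 ha0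
  have hb' := ENNReal.inv_ne_top.2 hb0
  have hc_top : c ≠ ∞ := ENNReal.mul_ne_top (ENNReal.rpow_ne_top_of_nonneg ht1'.le ha')
    (ENNReal.rpow_ne_top_of_nonneg ht0.le hb')
  have hc0 : c ≠ 0 := by
    simp [hc, ENNReal.rpow_eq_zero_iff, hf1, hg1, ha', hb', ht0.not_gt, ht1.not_gt]
  have key := prekopaLeindler_real_of_iSup_eq_one ht0 ht1 (hf.const_mul a⁻¹) (hg.const_mul b⁻¹)
    (hh.const_mul c) (by rw [← ENNReal.mul_iSup, ENNReal.inv_mul_cancel ha0 hf1])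
    (by rw [← ENNReal.mul_iSup, ENNReal.inv_mul_cancel hb0 hg1]) fun x y => by
      rw [ENNReal.mul_rpow_of_nonneg _ _ ht1'.le, ENNReal.mul_rpow_of_nonneg _ _ ht0.le,
        mul_mul_mul_comm]
      gcongr
      exact H x y
  rw [lintegral_const_mul _ hf, lintegral_const_mul _ hg, lintegral_const_mul _ hh,
    ENNReal.mul_rpow_of_nonneg _ _ ht1'.le, ENNReal.mul_rpow_of_nonneg _ _ ht0.le,
    mul_mul_mul_comm] at key
  exact (ENNReal.mul_le_mul_iff_right hc0 hc_top).1 key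

theorem tendsto_lintegral_min_natCast {α : Type*} [MeasurableSpace α] {μ : Measure α}
    {f : α → ℝ≥0∞} (hf : Measurable f) :
    Tendsto (fun n : ℕ => ∫⁻ x, min (f x) n ∂μ) atTop (𝓝 (∫⁻ x, f x ∂μ)) := by
  refine lintegral_tendsto_of_tendsto_of_monotone
    (fun n => (hf.min measurable_const).aemeasurable)
    (Eventually.of_forall fun x i j hij => ?_) (Eventually.of_forall fun x => ?_)
  · exact min_le_min_left _ (Nat.cast_le.2 hij)
  · simpa using (tendsto_const_nhds (x := f x)).min ENNReal.tendsto_nat_nhds_top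

theorem prekopaLeindler_real (ht0 : 0 < t) (ht1 : t < 1) :
    PrekopaLeindler t (volume : Measure ℝ) := by
  intro f g h hf hg hh H
  have ht1' : 0 < 1 - t := sub_pos.2 ht1
  rcases eq_or_ne (∫⁻ x, f x) 0 with hf0 | hf0
  · simp [hf0, ht1']
  rcases eq_or_ne (∫⁻ x, g x) 0 with hg0 | hg0
  · simp [hg0, ht0]
  refine le_of_tendsto (ENNReal.Tendsto.mul
    ((ENNReal.continuous_rpow_const.tendsto _).comp (tendsto_lintegral_min_natCast hf)) ?_
    ((ENNReal.continuous_rpow_const.tendsto _).comp (tendsto_lintegral_min_natCast hg)) ?_)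
    (Eventually.of_forall fun n => ?_)
  · left; simp [ENNReal.rpow_eq_zero_iff, hf0, ht1.not_gt]
  · left; simp [ENNReal.rpow_eq_zero_iff, hg0, ht0.not_gt]
  · refine prekopaLeindler_real_of_bounded ht0 ht1 (hf.min measurable_const)
      (hg.min measurable_const) hh ?_ ?_ fun x y => le_trans ?_ (H x y)
    · exact ((iSup_le fun x => min_le_right _ _).trans_lt (ENNReal.natCast_lt_top n)).ne
    · exact ((iSup_le fun x => min_le_right _ _).trans_lt (ENNReal.natCast_lt_top n)).ne
    · gcongr <;> exact min_le_left _ _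

end Line

theorem PrekopaLeindler.prod {E F : Type*} [AddCommGroup E] [Module ℝ E] [MeasurableSpace E]
    [AddCommGroup F] [Module ℝ F] [MeasurableSpace F] {t : ℝ} {μ : Measure E} {ν : Measure F}
    [SFinite ν] (hμ : PrekopaLeindler t μ) (hν : PrekopaLeindler t ν) :
    PrekopaLeindler t (μ.prod ν) := by
  intro f g h hf hg hh H
  rw [lintegral_prod _ hf.aemeasurable, lintegral_prod _ hg.aemeasurable,
    lintegral_prod _ hh.aemeasurable]
  refine hμ _ _ _ hf.lintegral_prod_right' hg.lintegral_prod_right' hh.lintegral_prod_right'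
    fun x x' => ?_
  exact hν _ _ _ (hf.comp measurable_prodMk_left) (hg.comp measurable_prodMk_left)
    (hh.comp measurable_prodMk_left) fun y y' => H (x, y) (x', y')

theorem PrekopaLeindler.of_measurePreserving {E F : Type*} [AddCommGroup E] [Module ℝ E]
    [MeasurableSpace E] [AddCommGroup F] [Module ℝ F] [MeasurableSpace F] {t : ℝ} {μ : Measure E}
    {ν : Measure F} (hμ : PrekopaLeindler t μ) (e : E → F) (he : MeasurePreserving e μ ν)
    (hadd : ∀ x y, e (x + y) = e x + e y) (hsmul : ∀ (c : ℝ) x, e (c • x) = c • e x) :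
    PrekopaLeindler t ν := by
  intro f g h hf hg hh H
  rw [← he.lintegral_comp hf, ← he.lintegral_comp hg, ← he.lintegral_comp hh]
  exact hμ _ _ _ (hf.comp he.measurable) (hg.comp he.measurable) (hh.comp he.measurable)
    fun x y => by simpa [hadd, hsmul] using H (e x) (e y)

theorem prekopaLeindler_pi {t : ℝ} (ht0 : 0 < t) (ht1 : t < 1) (n : ℕ) :
    PrekopaLeindler t (volume : Measure (Fin n → ℝ)) := by
  induction n with
  | zero =>
    intro f g h hf hg hh H
    have hv : (volume : Measure (Fin 0 → ℝ)) = Measure.dirac 0 := by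
      rw [volume_pi, Measure.pi_of_empty _ 0]
    simpa [hv] using H 0 0
  | succ n ih =>
    refine ((prekopaLeindler_real ht0 ht1).prod ih).of_measurePreserving
      (MeasurableEquiv.piFinSuccAbove (fun _ => ℝ) 0).symm
      ((volume_preserving_piFinSuccAbove (fun _ : Fin (n + 1) => ℝ) 0).symm _) ?_ ?_
    · rintro ⟨x, u⟩ ⟨y, v⟩
      ext i
      refine Fin.cases ?_ (fun j => ?_) i <;> simp [Fin.insertNthEquiv]
    · rintro c ⟨x, u⟩
      ext i
      refine Fin.cases ?_ (fun j => ?_) i <;> simp [Fin.insertNthEquiv]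

theorem prekopaLeindler_euclideanSpace {t : ℝ} (ht0 : 0 < t) (ht1 : t < 1) (n : ℕ) :
    PrekopaLeindler t (volume : Measure (EuclideanSpace ℝ (Fin n))) :=
  (prekopaLeindler_pi ht0 ht1 n).of_measurePreserving (WithLp.toLp 2)
    (PiLp.volume_preserving_toLp (Fin n)) (fun _ _ => rfl) fun _ _ => rfl

/-- The measure with density `exp (-‖x‖² / 2)` with respect to Lebesgue measure. -/
noncomputable def gaussianWeight (n : ℕ) : Measure (En n) :=
  volume.withDensity fun x => ENNReal.ofReal (Real.exp (-‖x‖ ^ 2 / 2))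

theorem integrable_exp_neg_norm_sq_div_two (n : ℕ) :
    Integrable fun x : En n => Real.exp (-‖x‖ ^ 2 / 2) := by
  have h := (GaussianFourier.integrable_cexp_neg_mul_sq_norm_add (V := En n) (b := 1 / 2)
    (by norm_num) 0 0).norm
  refine h.congr (Eventually.of_forall fun x => ?_)
  simp only [Complex.norm_exp]
  congr 1
  have : (-(1 / 2 : ℂ) * (‖x‖ : ℂ) ^ 2 + 0 * ((inner ℝ (0 : En n) x : ℝ) : ℂ)) =
      ((-‖x‖ ^ 2 / 2 : ℝ) : ℂ) := by push_cast; ring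
  rw [this, Complex.ofReal_re]

instance (n : ℕ) : IsFiniteMeasure (gaussianWeight n) :=
  isFiniteMeasure_withDensity_ofReal (integrable_exp_neg_norm_sq_div_two n).2

theorem volume_absolutelyContinuous_gaussianWeight (n : ℕ) :
    (volume : Measure (En n)) ≪ gaussianWeight n :=
  withDensity_absolutelyContinuous' (by fun_prop)
    (Eventually.of_forall fun x => by simp [Real.exp_pos])

theorem gaussianMeasure_eq_mul_gaussianWeight (n : ℕ) (A : Set (En n)) :
    gaussianMeasure n A = (2 * Real.pi) ^ (-(n : ℝ) / 2) * (gaussianWeight n).real A := by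
  rw [gaussianMeasure, gaussianWeight, measureReal_def, withDensity_apply',
    integral_eq_lintegral_of_nonneg_ae (Eventually.of_forall fun x => (Real.exp_pos _).le)]
  exact (integrable_exp_neg_norm_sq_div_two n).restrict.aestronglyMeasurable

theorem gaussianWeight_closure {n : ℕ} {A : Set (En n)} (hA : Convex ℝ A) :
    gaussianWeight n (closure A) = gaussianWeight n A := by
  have h : gaussianWeight n (frontier A) = 0 :=
    withDensity_absolutelyContinuous _ _ (hA.addHaar_frontier volume)
  refine le_antisymm ?_ (measure_mono subset_closure)
  rw [closure_eq_self_union_frontier]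
  simpa [h] using measure_union_le (μ := gaussianWeight n) A (frontier A)

theorem norm_sq_convexCombination {E : Type*} [NormedAddCommGroup E] [InnerProductSpace ℝ E]
    (x y : E) (t : ℝ) :
    ‖(1 - t) • x + t • y‖ ^ 2 = (1 - t) * ‖x‖ ^ 2 + t * ‖y‖ ^ 2 - t * (1 - t) * ‖x - y‖ ^ 2 := by
  rw [norm_add_sq_real, norm_sub_sq_real, norm_smul, norm_smul, mul_pow, mul_pow, inner_smul_left,
    inner_smul_right, Real.norm_eq_abs, Real.norm_eq_abs, sq_abs, sq_abs]
  simp only [conj_trivial]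
  ring

theorem infDist_add_infDist_le_norm_sub {E : Type*} [NormedAddCommGroup E] [NormedSpace ℝ E]
    {K L : Set E} {x y : E} (hx : x ∈ K) (hy : y ∈ L) {t : ℝ} (ht0 : 0 ≤ t) (ht1 : t ≤ 1) :
    infDist ((1 - t) • x + t • y) K + infDist ((1 - t) • x + t • y) L ≤ ‖x - y‖ := by
  have h1 : dist ((1 - t) • x + t • y) x = t * ‖x - y‖ := by
    rw [dist_eq_norm, show (1 - t) • x + t • y - x = (-t) • (x - y) by module, norm_smul]
    simp [abs_of_nonneg ht0]
  have h2 : dist ((1 - t) • x + t • y) y = (1 - t) * ‖x - y‖ := by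
    rw [dist_eq_norm, show (1 - t) • x + t • y - y = (1 - t) • (x - y) by module, norm_smul]
    simp [abs_of_nonneg (sub_nonneg.2 ht1)]
  have := infDist_le_dist_of_mem (x := (1 - t) • x + t • y) hx
  have := infDist_le_dist_of_mem (x := (1 - t) • x + t • y) hy
  linarith

section Deficit

variable {n : ℕ} {K L : Set (En n)} {t : ℝ}

/-- Brunn–Minkowski for the Gaussian weight, with a factor accounting for the distance between the
points being averaged. -/
theorem gaussianWeight_rpow_mul_rpow_le (hK : IsClosed K) (hL : IsClosed L) (ht0 : 0 < t)
    (ht1 : t < 1) :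
    gaussianWeight n K ^ (1 - t) * gaussianWeight n L ^ t ≤
      ∫⁻ z in closure ((1 - t) • K + t • L), ENNReal.ofReal
        (Real.exp (-(t * (1 - t) / 2 * (infDist z K + infDist z L) ^ 2)))
          ∂gaussianWeight n := by
  have ht1' : 0 < 1 - t := sub_pos.2 ht1
  have hdens : Measurable fun x : En n => ENNReal.ofReal (Real.exp (-‖x‖ ^ 2 / 2)) := by fun_prop
  have hdef : Measurable fun z : En n => ENNReal.ofReal
      (Real.exp (-(t * (1 - t) / 2 * (infDist z K + infDist z L) ^ 2))) := by fun_prop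
  rw [gaussianWeight, restrict_withDensity isClosed_closure.measurableSet,
    lintegral_withDensity_eq_lintegral_mul _ hdens hdef, withDensity_apply', withDensity_apply',
    ← lintegral_indicator hK.measurableSet, ← lintegral_indicator hL.measurableSet,
    ← lintegral_indicator isClosed_closure.measurableSet]
  refine prekopaLeindler_euclideanSpace ht0 ht1 n _ _ _ (hdens.indicator hK.measurableSet)
    (hdens.indicator hL.measurableSet)
    ((hdens.mul hdef).indicator isClosed_closure.measurableSet) fun x y => ?_
  by_cases hx : x ∈ K
  swap
  · simp [hx, ht1']
  by_cases hy : y ∈ L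
  swap
  · simp [hy, ht0]
  have hz : (1 - t) • x + t • y ∈ closure ((1 - t) • K + t • L) :=
    subset_closure (add_mem_add (smul_mem_smul_set hx) (smul_mem_smul_set hy))
  rw [indicator_of_mem hx, indicator_of_mem hy, indicator_of_mem hz, Pi.mul_apply,
    ENNReal.ofReal_rpow_of_pos (Real.exp_pos _), ENNReal.ofReal_rpow_of_pos (Real.exp_pos _),
    ← Real.exp_mul, ← Real.exp_mul, ← ENNReal.ofReal_mul (Real.exp_pos _).le,
    ← ENNReal.ofReal_mul (Real.exp_pos _).le, ← Real.exp_add, ← Real.exp_add]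
  refine ENNReal.ofReal_le_ofReal (Real.exp_le_exp.2 ?_)
  have hd := infDist_add_infDist_le_norm_sub hx hy ht0.le ht1.le
  have hsq := pow_le_pow_left₀ (add_nonneg infDist_nonneg infDist_nonneg) hd 2
  have := mul_le_mul_of_nonneg_left hsq (mul_pos ht0 ht1').le
  rw [norm_sq_convexCombination]
  linarith

theorem gaussianWeight_rpow_mul_rpow_le_add (hK : IsClosed K) (hL : IsClosed L)
    (hKc : Convex ℝ K) (hLc : Convex ℝ L) (ht0 : 0 < t) (ht1 : t < 1) :
    gaussianWeight n K ^ (1 - t) * gaussianWeight n L ^ t ≤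
      gaussianWeight n ((1 - t) • K + t • L) := by
  refine (gaussianWeight_rpow_mul_rpow_le hK hL ht0 ht1).trans ?_
  rw [← gaussianWeight_closure ((hKc.smul _).add (hLc.smul _)), ← setLIntegral_one]
  refine lintegral_mono fun z => ?_
  rw [← ENNReal.ofReal_one]
  refine ENNReal.ofReal_le_ofReal (Real.exp_le_one_iff.2 (neg_nonpos.2 ?_))
  have := sub_pos.2 ht1
  positivity

/-- In the equality case, the Minkowski combination is almost contained in both sets. -/
theorem gaussianWeight_add_le_inter (hK : IsClosed K) (hL : IsClosed L) (hK' : K.Nonempty)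
    (hL' : L.Nonempty) (hKc : Convex ℝ K) (hLc : Convex ℝ L) (ht0 : 0 < t) (ht1 : t < 1)
    (h : gaussianWeight n ((1 - t) • K + t • L) ≤
      gaussianWeight n K ^ (1 - t) * gaussianWeight n L ^ t) :
    gaussianWeight n ((1 - t) • K + t • L) ≤ gaussianWeight n (K ∩ L) := by
  have ht1' := sub_pos.2 ht1
  have hle := h.trans (gaussianWeight_rpow_mul_rpow_le hK hL ht0 ht1)
  rw [← gaussianWeight_closure ((hKc.smul _).add (hLc.smul _)), ← setLIntegral_one] at hle
  have hle1 : ∀ z : En n, ENNReal.ofReal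
      (Real.exp (-(t * (1 - t) / 2 * (infDist z K + infDist z L) ^ 2))) ≤ 1 := fun z => by
    rw [← ENNReal.ofReal_one]
    refine ENNReal.ofReal_le_ofReal (Real.exp_le_one_iff.2 (neg_nonpos.2 ?_))
    positivity
  have hae := ae_eq_of_ae_le_of_lintegral_le (Eventually.of_forall hle1)
    ((lintegral_mono hle1).trans_lt (by simp)).ne measurable_const.aemeasurable hle
  rw [← gaussianWeight_closure ((hKc.smul _).add (hLc.smul _))]
  refine measure_mono_ae ?_
  filter_upwards [(ae_restrict_iff' isClosed_closure.measurableSet).1 hae] with z hz hzM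
  have h0 : t * (1 - t) / 2 * (infDist z K + infDist z L) ^ 2 = 0 := by simpa using hz hzM
  have h1 : infDist z K + infDist z L = 0 := by
    simpa [ht0.ne', ht1'.ne'] using h0
  have hzK : infDist z K = 0 := by
    linarith [infDist_nonneg (x := z) (s := K), infDist_nonneg (x := z) (s := L)]
  have hzL : infDist z L = 0 := by linarith
  exact ⟨(hK.mem_iff_infDist_zero hK').2 hzK, (hL.mem_iff_infDist_zero hL').2 hzL⟩

theorem subset_of_gaussianWeight_le_inter (hKc : Convex ℝ K) (hKi : (interior K).Nonempty)
    (hL : IsClosed L) (h : gaussianWeight n K ≤ gaussianWeight n (K ∩ L)) : K ⊆ L := by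
  have h0 : gaussianWeight n (K \ L) = 0 := by
    have := measure_inter_add_sdiff (μ := gaussianWeight n) K hL.measurableSet
    by_contra hne
    exact absurd (this.le.trans h) (not_le.2 (ENNReal.lt_add_right (measure_ne_top _ _) hne))
  have h1 : interior K ⊆ L := by
    have h2 : volume (interior K \ L) = 0 := volume_absolutelyContinuous_gaussianWeight n
      (measure_mono_null (sdiff_subset_sdiff_left interior_subset) h0)
    rw [← sdiff_eq_empty]
    exact ((isOpen_interior.sdiff hL).measure_eq_zero_iff _).1 h2
  calc K ⊆ closure K := subset_closure
    _ = closure (interior K) := (hKc.closure_interior_eq_closure_of_nonempty_interior hKi).symm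
    _ ⊆ L := closure_minimal h1 hL

end Deficit

theorem Real.eq_of_rpow_mul_rpow_le_of_le {a b t : ℝ} (ha : 0 < a) (hab : a ≤ b) (ht0 : 0 < t)
    (h : a ^ (1 - t) * b ^ t ≤ a) : a = b := by
  have h1 : a ^ (1 - t) * b ^ t ≤ a ^ (1 - t) * a ^ t := by
    rwa [← Real.rpow_add ha, sub_add_cancel, Real.rpow_one]
  have h2 := le_of_mul_le_mul_left h1 (Real.rpow_pos_of_pos ha _)
  exact hab.antisymm ((Real.rpow_le_rpow_iff (ha.le.trans hab) ha.le ht0).1 h2)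

theorem IsCPseudoCone.interior_nonempty {n : ℕ} {C K : Set (En n)} (hK : IsCPseudoCone C K)
    (hC : (interior C).Nonempty) : (interior K).Nonempty := by
  obtain ⟨⟨⟨x, hx⟩, -⟩, rfl⟩ := hK
  have hsub : x +ᵥ interior (recessionCone K) ⊆ interior K := by
    refine interior_maximal ?_ (isOpen_interior.vadd x)
    rintro _ ⟨z, hz, rfl⟩
    exact interior_subset hz x hx
  exact hC.vadd_set.mono hsub

/-- Log-concavity of the Gaussian measure on `C`-pseudo-cones, with equality iff `K = L`:
`γⁿ((1-t)K + tL) ≥ γⁿ(K)^{1-t} γⁿ(L)^t` for `0 < t < 1`. -/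
theorem gaussian_log_concave_pseudo_cones {n : ℕ} (hn : 1 ≤ n) (C K L : Set (En n))
    (hC : IsPointedCone C) (hK : IsCPseudoCone C K) (hL : IsCPseudoCone C L)
    (t : ℝ) (ht0 : 0 < t) (ht1 : t < 1) :
    gaussianMeasure n ((1 - t) • K + t • L) ≥
        gaussianMeasure n K ^ (1 - t) * gaussianMeasure n L ^ t ∧
      (gaussianMeasure n ((1 - t) • K + t • L) =
          gaussianMeasure n K ^ (1 - t) * gaussianMeasure n L ^ t ↔ K = L) := by
  obtain ⟨⟨hKne, hKcl, hKc, -, -⟩, -⟩ := id hK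
  obtain ⟨⟨hLne, hLcl, hLc, -, -⟩, -⟩ := id hL
  have hKi := hK.interior_nonempty hC.2.2.2.1
  have hLi := hL.interior_nonempty hC.2.2.2.1
  have ht1' : 0 < 1 - t := sub_pos.2 ht1
  simp only [gaussianMeasure_eq_mul_gaussianWeight]
  set c : ℝ := (2 * Real.pi) ^ (-(n : ℝ) / 2)
  have hc0 : 0 < c := Real.rpow_pos_of_pos (by positivity) _
  have hprod : ∀ a b : ℝ, 0 ≤ a → 0 ≤ b →
      (c * a) ^ (1 - t) * (c * b) ^ t = c * (a ^ (1 - t) * b ^ t) := fun a b ha hb => by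
    rw [Real.mul_rpow hc0.le ha, Real.mul_rpow hc0.le hb, mul_mul_mul_comm, ← Real.rpow_add hc0,
      sub_add_cancel, Real.rpow_one]
  rw [hprod _ _ measureReal_nonneg measureReal_nonneg, ge_iff_le, mul_le_mul_iff_right₀ hc0,
    mul_right_inj' hc0.ne']
  have hpos : ∀ A : Set (En n), (interior A).Nonempty → 0 < (gaussianWeight n).real A :=
    fun A hA => ENNReal.toReal_pos (fun h => (Measure.measure_pos_of_nonempty_interior volume hA).ne'
      (volume_absolutelyContinuous_gaussianWeight n h)) (measure_ne_top _ _)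
  have hreal : (gaussianWeight n K ^ (1 - t) * gaussianWeight n L ^ t).toReal =
      (gaussianWeight n).real K ^ (1 - t) * (gaussianWeight n).real L ^ t := by
    rw [ENNReal.toReal_mul, ← ENNReal.toReal_rpow, ← ENNReal.toReal_rpow]
    rfl
  have htop : gaussianWeight n K ^ (1 - t) * gaussianWeight n L ^ t ≠ ∞ :=
    ENNReal.mul_ne_top (ENNReal.rpow_ne_top_of_nonneg ht1'.le (measure_ne_top _ _))
      (ENNReal.rpow_ne_top_of_nonneg ht0.le (measure_ne_top _ _))
  refine ⟨?_, fun heq => ?_, ?_⟩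
  · rw [← hreal]
    exact ENNReal.toReal_mono (measure_ne_top _ _)
      (gaussianWeight_rpow_mul_rpow_le_add hKcl hLcl hKc hLc ht0 ht1)
  · have hM := gaussianWeight_add_le_inter hKcl hLcl hKne hLne hKc hLc ht0 ht1
      ((ENNReal.toReal_le_toReal (measure_ne_top _ _) htop).1 (heq.trans hreal.symm).le)
    have hMr := ENNReal.toReal_mono (measure_ne_top _ _) hM
    have hMK := hMr.trans (measureReal_mono (μ := gaussianWeight n) inter_subset_left)
    have hML := hMr.trans (measureReal_mono (μ := gaussianWeight n) inter_subset_right)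
    rw [← measureReal_def, heq] at hMr hMK hML
    have hKL : (gaussianWeight n).real K = (gaussianWeight n).real L := by
      rcases le_total ((gaussianWeight n).real K) ((gaussianWeight n).real L) with hle | hle
      · exact Real.eq_of_rpow_mul_rpow_le_of_le (hpos K hKi) hle ht0 hMK
      · refine (Real.eq_of_rpow_mul_rpow_le_of_le (t := 1 - t) (hpos L hLi) hle ht1' ?_).symm
        rwa [sub_sub_cancel, mul_comm]
    rw [hKL, ← Real.rpow_add (hpos L hLi), sub_add_cancel, Real.rpow_one] at hMr
    refine Subset.antisymm (subset_of_gaussianWeight_le_inter hKc hKi hLcl ?_)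
      (subset_of_gaussianWeight_le_inter hLc hLi hKcl ?_)
    · exact (ENNReal.toReal_le_toReal (measure_ne_top _ _) (measure_ne_top _ _)).1
        (hKL.le.trans hMr)
    · rw [inter_comm]
      exact (ENNReal.toReal_le_toReal (measure_ne_top _ _) (measure_ne_top _ _)).1 hMr
  · rintro rfl
    rw [← hKc.add_smul ht1'.le ht0.le, sub_add_cancel, one_smul, ← Real.rpow_add (hpos K hKi),
      sub_add_cancel, Real.rpow_one]
end
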